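/- For all γ > d > ε > 0 and all t₀ there exist T₀ and n₀ ∈ ℕ such that the following holds. If H is a 3-uniform hypergraph on n > n₀ vertices with δ₁(H) ≥ (7/16 + γ)·C(n,2), then there exists an (ε,t)-regular partition Q of H with t₀ < t < T₀ such that the cluster hypergraph K = K(ε,d,Q) has minimum vertex degree δ₁(K) ≥ (7/16 + γ − ε − d)·C(t,2). -/

import Mathlib

open Finset

/-- The number of edges of `H` with exactly one vertex in each of `A₁`, `A₂`, `A₃`. -/
def eCross {V : Type} [DecidableEq V] (H : Finset (Finset V)) (A1 A2 A3 : Finset V) : ℕ :=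
  (H.filter (fun e => (e ∩ A1).card = 1 ∧ (e ∩ A2).card = 1 ∧ (e ∩ A3).card = 1)).card

/-- The density of `H` with respect to the triple `(A₁, A₂, A₃)`. -/
noncomputable def triDensity {V : Type} [DecidableEq V] (H : Finset (Finset V))
    (A1 A2 A3 : Finset V) : ℝ :=
  (eCross H A1 A2 A3 : ℝ) / ((A1.card : ℝ) * (A2.card : ℝ) * (A3.card : ℝ))

/-- The triple `(V₁, V₂, V₃)` is `(ε, d)`-regular in `H`. -/
def RegTriple {V : Type} [DecidableEq V] (H : Finset (Finset V)) (ε d : ℝ)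
    (V1 V2 V3 : Finset V) : Prop :=
  ∀ A1 A2 A3 : Finset V, A1 ⊆ V1 → A2 ⊆ V2 → A3 ⊆ V3 →
    ε * V1.card ≤ A1.card → ε * V2.card ≤ A2.card → ε * V3.card ≤ A3.card →
    |triDensity H A1 A2 A3 - d| ≤ ε

/-- The triple `(V₁, V₂, V₃)` is `ε`-regular in `H`. -/
def EpsRegTriple {V : Type} [DecidableEq V] (H : Finset (Finset V)) (ε : ℝ)
    (V1 V2 V3 : Finset V) : Prop :=
  ∃ d : ℝ, 0 ≤ d ∧ RegTriple H ε d V1 V2 V3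

/-- The triple of clusters `(V₁, V₂, V₃)` forms an edge of the cluster hypergraph
`K(ε, d, Q)`: it is `ε`-regular and has density at least `d`. -/
def ClusterEdge {V : Type} [DecidableEq V] (H : Finset (Finset V)) (ε d : ℝ)
    (V1 V2 V3 : Finset V) : Prop :=
  EpsRegTriple H ε V1 V2 V3 ∧ d ≤ triDensity H V1 V2 V3

/-!
Weak (Chung) regularity is proved by energy increment. The energy of a partition is the `L²` norm
of the conditional expectation of the edge indicator on ordered triples. In it the exceptional
vertices count as singletons, so that cutting the clusters further always refines the partition,
whatever happens to the exceptional set. Many irregular triples make one refinement raise the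
energy by a definite amount, and the energy is bounded.

An averaging argument makes the partition regular around every cluster: those lying in too many
irregular triples are few and are moved to the exceptional set. The degree bound then follows for
each cluster `A` by double counting the edges that meet `A`. Apart from negligibly many that meet
the exceptional set or have two vertices in one cluster, these lie in triples `(A, B, C)` of
clusters, of which the irregular ones cost at most `ε` and the sparse ones at most `d`.
-/

open scoped BigOperators

section FiberAverage

variable {Ω α β : Type*} [Fintype Ω] [DecidableEq α] [DecidableEq β]

/-- The conditional expectation of `f` given `φ`, for the uniform measure on `Ω`: at `w`, the
average of `f` over the fibre of `φ` through `w`. -/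
noncomputable def fiberAvg (φ : Ω → α) (f : Ω → ℝ) (w : Ω) : ℝ :=
  𝔼 x with φ x = φ w, f x

lemma fiberAvg_factorsThrough (φ : Ω → α) (f : Ω → ℝ) : (fiberAvg φ f).FactorsThrough φ :=
  fun _ _ h ↦ by simp only [fiberAvg, h]

lemma fiberAvg_id [DecidableEq Ω] (f : Ω → ℝ) : fiberAvg id f = f := by
  ext w
  simp [fiberAvg, filter_eq']

lemma sum_mul_fiberAvg {φ : Ω → α} {u : Ω → ℝ} (hu : u.FactorsThrough φ) (f : Ω → ℝ) :
    ∑ w, u w * fiberAvg φ f w = ∑ w, u w * f w := by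
  have hφ : ∀ w ∈ univ, φ w ∈ univ.image φ := fun w hw ↦ mem_image_of_mem φ hw
  rw [← sum_fiberwise_of_maps_to hφ, ← sum_fiberwise_of_maps_to hφ fun w ↦ u w * f w]
  refine sum_congr rfl fun a ha ↦ ?_
  obtain ⟨v, -, rfl⟩ := mem_image.1 ha
  calc ∑ w with φ w = φ v, u w * fiberAvg φ f w
      = ∑ w with φ w = φ v, u v * fiberAvg φ f v := sum_congr rfl fun w hw ↦ by
        rw [hu (mem_filter.1 hw).2, fiberAvg_factorsThrough φ f (mem_filter.1 hw).2]
    _ = u v * ∑ w with φ w = φ v, f w := by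
        rw [sum_const, nsmul_eq_mul, mul_left_comm, fiberAvg, card_mul_expect]
    _ = ∑ w with φ w = φ v, u w * f w := by
        rw [mul_sum]
        exact sum_congr rfl fun w hw ↦ by rw [hu (mem_filter.1 hw).2]

lemma sum_fiberAvg_sq_add_sum_sub_sq {φ : Ω → α} {ψ : Ω → β} (h : φ.FactorsThrough ψ)
    (f : Ω → ℝ) :
    ∑ w, fiberAvg φ f w ^ 2 + ∑ w, (fiberAvg ψ f w - fiberAvg φ f w) ^ 2 =
      ∑ w, fiberAvg ψ f w ^ 2 := by
  have hφ := sum_mul_fiberAvg (fiberAvg_factorsThrough φ f) f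
  have hψ := sum_mul_fiberAvg (fun _ _ hw ↦ fiberAvg_factorsThrough φ f (h hw)) f (φ := ψ)
  have orthogonal : ∑ w, fiberAvg φ f w * (fiberAvg ψ f w - fiberAvg φ f w) = 0 := by
    simp only [mul_sub, sum_sub_distrib, hφ, hψ, sub_self]
  calc ∑ w, fiberAvg φ f w ^ 2 + ∑ w, (fiberAvg ψ f w - fiberAvg φ f w) ^ 2
      = ∑ w, fiberAvg ψ f w ^ 2
          - 2 * ∑ w, fiberAvg φ f w * (fiberAvg ψ f w - fiberAvg φ f w) := by
        rw [mul_sum, ← sum_sub_distrib, ← sum_add_distrib]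
        exact sum_congr rfl fun w _ ↦ by ring
    _ = ∑ w, fiberAvg ψ f w ^ 2 := by rw [orthogonal, mul_zero, sub_zero]

lemma sum_fiberAvg_sq_le (φ : Ω → α) (f : Ω → ℝ) : ∑ w, fiberAvg φ f w ^ 2 ≤ ∑ w, f w ^ 2 := by
  classical
  have h := sum_fiberAvg_sq_add_sum_sub_sq (φ := φ) (ψ := id) (fun _ _ ↦ congrArg φ) f
  rw [fiberAvg_id] at h
  exact h ▸ le_add_of_nonneg_right (sum_nonneg fun _ _ ↦ sq_nonneg _)

lemma sum_fiberAvg_of_saturated {φ : Ω → α} {S : Finset Ω}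
    (hS : ∀ w w', φ w = φ w' → (w ∈ S ↔ w' ∈ S)) (f : Ω → ℝ) :
    ∑ w ∈ S, fiberAvg φ f w = ∑ w ∈ S, f w := by
  classical
  have h := sum_mul_fiberAvg (φ := φ) (u := fun w ↦ if w ∈ S then 1 else 0)
    (fun w w' hw ↦ by simp only [hS w w' hw]) f
  simpa only [ite_mul, one_mul, zero_mul, sum_ite_mem, univ_inter] using h

lemma card_mul_sq_le_sum_fiberAvg_sub_sq {φ : Ω → α} {ψ : Ω → β} {f : Ω → ℝ} {S : Finset Ω}
    {a : ℝ} (hφ : ∀ w ∈ S, fiberAvg φ f w = a)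
    (hψ : ∀ w w', ψ w = ψ w' → (w ∈ S ↔ w' ∈ S)) :
    #S * (𝔼 w ∈ S, f w - a) ^ 2 ≤ ∑ w ∈ S, (fiberAvg ψ f w - fiberAvg φ f w) ^ 2 := by
  obtain rfl | hne := S.eq_empty_or_nonempty
  · simp
  have hS : (0 : ℝ) < #S := by exact_mod_cast hne.card_pos
  have hsum : ∑ w ∈ S, (fiberAvg ψ f w - fiberAvg φ f w) = #S * (𝔼 w ∈ S, f w - a) := by
    rw [sum_sub_distrib, sum_fiberAvg_of_saturated hψ, sum_congr rfl hφ, sum_const, nsmul_eq_mul,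
      mul_sub, card_mul_expect]
  have cauchy_schwarz := sq_sum_le_card_mul_sum_sq (s := S)
    (f := fun w ↦ fiberAvg ψ f w - fiberAvg φ f w)
  rw [hsum, mul_pow, sq (#S : ℝ), mul_assoc] at cauchy_schwarz
  exact le_of_mul_le_mul_left cauchy_schwarz hS

end FiberAverage

section Density

variable {V : Type} [DecidableEq V] {H : Finset (Finset V)} {A B C : Finset V}

/-- The indicator function of `H` on ordered triples; it vanishes on triples with a repeated
vertex when `H` is 3-uniform. -/
def edgeIndicator (H : Finset (Finset V)) (p : V × V × V) : ℝ :=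
  if {p.1, p.2.1, p.2.2} ∈ H then 1 else 0

lemma inter_eq_singletons_of_mem_boxes (hAB : Disjoint A B) (hAC : Disjoint A C)
    (hBC : Disjoint B C) {x y z : V} (hx : x ∈ A) (hy : y ∈ B) (hz : z ∈ C) :
    {x, y, z} ∩ A = {x} ∧ {x, y, z} ∩ B = {y} ∧ {x, y, z} ∩ C = {z} := by
  rw [disjoint_left] at hAB hAC hBC
  refine ⟨?_, ?_, ?_⟩ <;> ext w <;> simp only [mem_inter, mem_insert, mem_singleton] <;> grind

lemma eCross_eq_card_filter (hH : ∀ e ∈ H, #e = 3) (hAB : Disjoint A B) (hAC : Disjoint A C)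
    (hBC : Disjoint B C) :
    eCross H A B C = #{p ∈ A ×ˢ B ×ˢ C | {p.1, p.2.1, p.2.2} ∈ H} := by
  have traces {x y z : V} := @inter_eq_singletons_of_mem_boxes _ _ _ _ _ hAB hAC hBC x y z
  symm
  refine card_bij (fun p _ ↦ {p.1, p.2.1, p.2.2}) ?_ ?_ ?_
  · rintro ⟨x, y, z⟩ hp
    simp only [mem_filter, mem_product] at hp ⊢
    obtain ⟨⟨hx, hy, hz⟩, he⟩ := hp
    obtain ⟨hA, hB, hC⟩ := traces hx hy hz
    simp only [he, hA, hB, hC, card_singleton, and_self]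
  · rintro ⟨x, y, z⟩ hp ⟨x', y', z'⟩ hp' heq
    simp only [mem_filter, mem_product] at hp hp' heq
    obtain ⟨hA, hB, hC⟩ := traces hp.1.1 hp.1.2.1 hp.1.2.2
    obtain ⟨hA', hB', hC'⟩ := traces hp'.1.1 hp'.1.2.1 hp'.1.2.2
    rw [heq] at hA hB hC
    rw [singleton_injective (hA.symm.trans hA'), singleton_injective (hB.symm.trans hB'),
      singleton_injective (hC.symm.trans hC')]
  · intro e he
    simp only [mem_filter, card_eq_one] at he
    obtain ⟨heH, ⟨x, hx⟩, ⟨y, hy⟩, ⟨z, hz⟩⟩ := he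
    obtain ⟨hxe, hxA⟩ := mem_inter.1 (hx ▸ mem_singleton_self x)
    obtain ⟨hye, hyB⟩ := mem_inter.1 (hy ▸ mem_singleton_self y)
    obtain ⟨hze, hzC⟩ := mem_inter.1 (hz ▸ mem_singleton_self z)
    have hcard : #{x, y, z} = 3 := card_eq_three.2 ⟨x, y, z,
      (ne_of_mem_of_not_mem hyB (disjoint_left.1 hAB hxA)).symm,
      (ne_of_mem_of_not_mem hzC (disjoint_left.1 hAC hxA)).symm,
      (ne_of_mem_of_not_mem hzC (disjoint_left.1 hBC hyB)).symm, rfl⟩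
    have hxyz : {x, y, z} = e := eq_of_subset_of_card_le
      (by simp only [insert_subset_iff, singleton_subset_iff]; exact ⟨hxe, hye, hze⟩)
      (by rw [hcard, hH e heH])
    refine ⟨(x, y, z), ?_, hxyz⟩
    simp only [mem_filter, mem_product, hxyz]
    exact ⟨⟨hxA, hyB, hzC⟩, heH⟩

lemma expect_edgeIndicator (hH : ∀ e ∈ H, #e = 3) (hAB : Disjoint A B) (hAC : Disjoint A C)
    (hBC : Disjoint B C) :
    𝔼 p ∈ A ×ˢ B ×ˢ C, edgeIndicator H p = triDensity H A B C := by
  simp only [expect_eq_sum_div_card, edgeIndicator, sum_boole, triDensity,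
    eCross_eq_card_filter hH hAB hAC hBC, card_product, Nat.cast_mul, mul_assoc]

lemma triDensity_nonneg (H : Finset (Finset V)) (A B C : Finset V) : 0 ≤ triDensity H A B C := by
  unfold triDensity
  positivity

lemma triDensity_le_one (hH : ∀ e ∈ H, #e = 3) (hAB : Disjoint A B) (hAC : Disjoint A C)
    (hBC : Disjoint B C) : triDensity H A B C ≤ 1 := by
  refine div_le_one_of_le₀ ?_ (by positivity)
  rw [eCross_eq_card_filter hH hAB hAC hBC, mul_assoc]
  exact_mod_cast (card_filter_le _ _).trans_eq (by simp only [card_product])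

lemma triDensity_swap (H : Finset (Finset V)) (A B C : Finset V) :
    triDensity H A B C = triDensity H A C B := by
  simp only [triDensity, eCross, and_comm (a := #(_ ∩ B) = 1), mul_right_comm _ (#B : ℝ)]

lemma ClusterEdge.swap {ε d : ℝ} (h : ClusterEdge H ε d A B C) : ClusterEdge H ε d A C B := by
  obtain ⟨⟨d', hd', hreg⟩, hd⟩ := h
  refine ⟨⟨d', hd', fun A₁ A₂ A₃ h₁ h₂ h₃ c₁ c₂ c₃ ↦ ?_⟩, triDensity_swap H A B C ▸ hd⟩
  rw [triDensity_swap]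
  exact hreg A₁ A₃ A₂ h₁ h₃ h₂ c₁ c₃ c₂

lemma EpsRegTriple.mono {ε ε' : ℝ} (hε : ε' ≤ ε) (h : EpsRegTriple H ε' A B C) :
    EpsRegTriple H ε A B C := by
  obtain ⟨d, hd, hreg⟩ := h
  refine ⟨d, hd, fun A₁ A₂ A₃ h₁ h₂ h₃ c₁ c₂ c₃ ↦ (hreg A₁ A₂ A₃ h₁ h₂ h₃ ?_ ?_ ?_).trans hε⟩
  exacts [(by gcongr : _ ≤ ε * (#A : ℝ)).trans c₁, (by gcongr : _ ≤ ε * (#B : ℝ)).trans c₂,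
    (by gcongr : _ ≤ ε * (#C : ℝ)).trans c₃]

/-- The subsets `A₁, A₂, A₃` witness that `(A, B, C)` is not `ε`-regular: they are large, and their
density differs from that of `(A, B, C)` by more than `ε`. -/
structure IsIrregularityWitness (H : Finset (Finset V)) (ε : ℝ) (A B C A₁ A₂ A₃ : Finset V) :
    Prop where
  subset₁ : A₁ ⊆ A
  subset₂ : A₂ ⊆ B
  subset₃ : A₃ ⊆ C
  le_card₁ : ε * #A ≤ #A₁
  le_card₂ : ε * #B ≤ #A₂
  le_card₃ : ε * #C ≤ #A₃
  lt_abs_sub : ε < |triDensity H A₁ A₂ A₃ - triDensity H A B C|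

lemma exists_isIrregularityWitness {ε : ℝ} (h : ¬ EpsRegTriple H ε A B C) :
    ∃ A₁ A₂ A₃, IsIrregularityWitness H ε A B C A₁ A₂ A₃ := by
  contrapose! h
  refine ⟨triDensity H A B C, triDensity_nonneg H A B C, fun A₁ A₂ A₃ h₁ h₂ h₃ c₁ c₂ c₃ ↦ ?_⟩
  exact not_lt.1 fun hlt ↦ h A₁ A₂ A₃ ⟨h₁, h₂, h₃, c₁, c₂, c₃, hlt⟩

end Density

section Families

variable {V : Type*} {P P' W : Finset (Finset V)} {A U : Finset V} {m : ℕ}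

/-- The non-exceptional clusters of an equitable partition: pairwise disjoint sets, all of the same
positive size `m`. -/
structure IsEqualFamily (P : Finset (Finset V)) (m : ℕ) : Prop where
  pos : 0 < m
  card_eq : ∀ A ∈ P, #A = m
  pairwiseDisjoint : (P : Set (Finset V)).PairwiseDisjoint id

/-- No member of `W` cuts `A`, that is, `A` lies in an atom of the algebra generated by `W`. -/
def IsUncutBy (W : Finset (Finset V)) (A : Finset V) : Prop :=
  ∀ w ∈ W, A ⊆ w ∨ Disjoint A w

lemma IsEqualFamily.subset (hP : IsEqualFamily P m) (h : P' ⊆ P) : IsEqualFamily P' m :=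
  ⟨hP.pos, fun A hA ↦ hP.card_eq A (h hA), hP.pairwiseDisjoint.subset (coe_subset.2 h)⟩

lemma IsEqualFamily.disjoint (hP : IsEqualFamily P m) {A B : Finset V} (hA : A ∈ P) (hB : B ∈ P)
    (h : A ≠ B) : Disjoint A B :=
  hP.pairwiseDisjoint hA hB h

variable [DecidableEq V]

/-- The exceptional class `V₀` of the partition with clusters `P`. -/
def leftover [Fintype V] (P : Finset (Finset V)) : Finset V := (P.biUnion id)ᶜ

namespace IsEqualFamily

lemma card_biUnion (hP : IsEqualFamily P m) : #(P.biUnion id) = #P * m := by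
  rw [Finset.card_biUnion hP.pairwiseDisjoint]
  exact sum_const_nat hP.card_eq

lemma card_mul_add_card_leftover [Fintype V] (hP : IsEqualFamily P m) :
    #P * m + #(leftover P) = Fintype.card V := by
  rw [← hP.card_biUnion, leftover, card_add_card_compl]

lemma insert (hP : IsEqualFamily P m) (hA : #A = m) (h : ∀ B ∈ P, Disjoint A B) :
    IsEqualFamily (insert A P) m where
  pos := hP.pos
  card_eq := forall_mem_insert _ _ _ |>.2 ⟨hA, hP.card_eq⟩
  pairwiseDisjoint := by
    rw [coe_insert]
    exact hP.pairwiseDisjoint.insert fun B hB _ ↦ h B hB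

end IsEqualFamily

lemma isUncutBy_of_filter_mem_eq {w : Finset (Finset V)}
    (h : ∀ x ∈ A, {s ∈ W | x ∈ s} = w) : IsUncutBy W A := by
  intro s hs
  have hmem (x) (hx : x ∈ A) : x ∈ s ↔ s ∈ w := by rw [← h x hx, mem_filter, and_iff_right hs]
  by_cases hsw : s ∈ w
  · exact .inl fun x hx ↦ (hmem x hx).2 hsw
  · exact .inr <| disjoint_left.2 fun x hx hxs ↦ hsw ((hmem x hx).1 hxs)

lemma exists_isEqualFamily_isUncutBy (W : Finset (Finset V)) (hm : 0 < m) (U : Finset V) :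
    ∃ P, IsEqualFamily P m ∧ (∀ A ∈ P, A ⊆ U) ∧ (∀ A ∈ P, IsUncutBy W A) ∧
      #(U \ P.biUnion id) ≤ 2 ^ #W * m := by
  induction U using Finset.strongInduction with
  | H U ih =>
  obtain hU | hU := le_or_gt #U (2 ^ #W * m)
  · exact ⟨∅, ⟨hm, by simp, by simp⟩, by simp, by simp, by simpa using hU⟩
  -- By pigeonhole, some atom of the algebra generated by `W` contains `m` points of `U`.
  obtain ⟨w, -, hw⟩ := exists_lt_card_fiber_of_mul_lt_card_of_maps_to
    (f := fun x ↦ {s ∈ W | x ∈ s}) (t := W.powerset) (fun x _ ↦ mem_powerset.2 (filter_subset _ _))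
    ((card_powerset W).symm ▸ hU)
  obtain ⟨S, hS, hSm⟩ := exists_subset_card_eq hw.le
  have hSU : S ⊆ U := hS.trans (filter_subset _ _)
  have hSne : S.Nonempty := card_pos.1 (hSm ▸ hm)
  obtain ⟨P, hP, hPU, hPW, hPc⟩ := ih (U \ S) (sdiff_ssubset hSU hSne)
  refine ⟨insert S P, hP.insert hSm fun B hB ↦ ?_, ?_, ?_, ?_⟩
  · exact disjoint_sdiff.mono_right (hPU B hB)
  · exact forall_mem_insert _ _ _ |>.2 ⟨hSU, fun A hA ↦ (hPU A hA).trans sdiff_subset⟩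
  · exact forall_mem_insert _ _ _ |>.2
      ⟨isUncutBy_of_filter_mem_eq fun x hx ↦ (mem_filter.1 (hS hx)).2, hPW⟩
  · rwa [biUnion_insert, id, ← Finset.sup_eq_union, ← _root_.sdiff_sdiff_left]

end Families

section Cells

variable {V : Type*} [DecidableEq V] {P P' W : Finset (Finset V)} {A w : Finset V} {x y : V}

/-- The part containing `v` of the partition whose parts are the clusters in `P` and one singleton
for each vertex outside all clusters. -/
def cell (P : Finset (Finset V)) (v : V) : Finset V := insert v ({A ∈ P | v ∈ A}.biUnion id)

lemma mem_cell : x ∈ cell P y ↔ x = y ∨ ∃ A ∈ P, y ∈ A ∧ x ∈ A := by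
  simp only [cell, mem_insert, mem_biUnion, mem_filter, id, and_assoc]

lemma mem_cell_self (P : Finset (Finset V)) (x : V) : x ∈ cell P x := mem_insert_self _ _

lemma cell_eq_iff (hP : (P : Set (Finset V)).PairwiseDisjoint id) (hA : A ∈ P) :
    cell P x = A ↔ x ∈ A := by
  refine ⟨fun h ↦ h ▸ mem_cell_self P x, fun hx ↦ ?_⟩
  have huniq (B) (hB : B ∈ P) (hxB : x ∈ B) : B = A := hP.elim_finset hB hA x hxB hx
  ext y
  rw [mem_cell]
  constructor
  · rintro (rfl | ⟨B, hB, hxB, hyB⟩)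
    exacts [hx, huniq B hB hxB ▸ hyB]
  · exact fun hy ↦ .inr ⟨A, hA, hx, hy⟩

lemma mem_iff_mem_of_cell_eq (hW : ∀ A ∈ P, IsUncutBy W A) (hw : w ∈ W)
    (h : cell P x = cell P y) : x ∈ w ↔ y ∈ w := by
  obtain rfl | ⟨A, hA, hyA, hxA⟩ := mem_cell.1 (h ▸ mem_cell_self P x)
  · rfl
  obtain hAw | hAw := hW A hA w hw
  · exact iff_of_true (hAw hxA) (hAw hyA)
  · exact iff_of_false (disjoint_left.1 hAw hxA) (disjoint_left.1 hAw hyA)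

lemma cell_factorsThrough (hP : (P : Set (Finset V)).PairwiseDisjoint id)
    (hsub : ∀ A ∈ P', A ⊆ P.biUnion id) (huncut : ∀ A ∈ P', IsUncutBy P A) :
    (cell P).FactorsThrough (cell P') := by
  intro x y h
  obtain rfl | ⟨A, hA, -, hxA⟩ := mem_cell.1 (h ▸ mem_cell_self P' x)
  · rfl
  obtain ⟨B, hB, hxB⟩ := mem_biUnion.1 (hsub A hA hxA)
  have hyB : y ∈ B := (mem_iff_mem_of_cell_eq huncut hB h).1 hxB
  exact ((cell_eq_iff hP hB).2 hxB).trans ((cell_eq_iff hP hB).2 hyB).symm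

/-- The box of the product partition of `V × V × V` containing `p`, given by its three sides. -/
def cellTriple (P : Finset (Finset V)) (p : V × V × V) : Finset V × Finset V × Finset V :=
  (cell P p.1, cell P p.2.1, cell P p.2.2)

lemma cellTriple_eq_iff (hP : (P : Set (Finset V)).PairwiseDisjoint id) {B C : Finset V}
    (hA : A ∈ P) (hB : B ∈ P) (hC : C ∈ P) {p : V × V × V} :
    cellTriple P p = (A, B, C) ↔ p ∈ A ×ˢ B ×ˢ C := by
  simp only [cellTriple, Prod.mk.injEq, cell_eq_iff hP, hA, hB, hC, mem_product]

lemma cellTriple_factorsThrough (hP : (P : Set (Finset V)).PairwiseDisjoint id)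
    (hsub : ∀ A ∈ P', A ⊆ P.biUnion id) (huncut : ∀ A ∈ P', IsUncutBy P A) :
    (cellTriple P).FactorsThrough (cellTriple P') := fun p q h ↦ by
  have hcell := cell_factorsThrough hP hsub huncut
  simp only [cellTriple, Prod.mk.injEq] at h ⊢
  exact ⟨hcell h.1, hcell h.2.1, hcell h.2.2⟩

end Cells

section Energy

variable {V : Type} [DecidableEq V] {H P P' W : Finset (Finset V)} {A B C : Finset V} {m : ℕ}
  {ε : ℝ}

open Classical in
/-- The ordered pairs of clusters of `Q`, distinct from each other and from `A`, that form an
irregular triple with `A`. -/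
noncomputable def irregularPairs (H : Finset (Finset V)) (ε : ℝ) (Q : Finset (Finset V))
    (A : Finset V) : Finset (Finset V × Finset V) :=
  {q ∈ (Q.erase A).offDiag | ¬ EpsRegTriple H ε A q.1 q.2}

lemma mem_irregularPairs {q : Finset V × Finset V} : q ∈ irregularPairs H ε P A ↔
    q ∈ (P.erase A).offDiag ∧ ¬ EpsRegTriple H ε A q.1 q.2 := by
  classical exact mem_filter

/-- The ordered triples of distinct clusters of `P` that are irregular; each set of three clusters
is counted six times. -/
noncomputable def irregularTriples (H : Finset (Finset V)) (ε : ℝ) (P : Finset (Finset V)) :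
    Finset (Finset V × Finset V × Finset V) :=
  {p ∈ P ×ˢ P ×ˢ P | p.2 ∈ irregularPairs H ε P p.1}

lemma mem_irregularTriples : (A, B, C) ∈ irregularTriples H ε P ↔
    A ∈ P ∧ B ∈ P ∧ C ∈ P ∧ A ≠ B ∧ A ≠ C ∧ B ≠ C ∧ ¬ EpsRegTriple H ε A B C := by
  simp only [irregularTriples, mem_filter, mem_irregularPairs, mem_product, mem_offDiag, mem_erase]
  tauto

lemma card_irregularTriples (H : Finset (Finset V)) (ε : ℝ) (P : Finset (Finset V)) :
    #(irregularTriples H ε P) = ∑ A ∈ P, #(irregularPairs H ε P A) := by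
  have hpair (A : Finset V) : {q ∈ P ×ˢ P | q ∈ irregularPairs H ε P A} =
      irregularPairs H ε P A := by
    rw [filter_mem_eq_inter, inter_eq_right]
    intro q hq
    have hq' := mem_offDiag.1 (mem_irregularPairs.1 hq).1
    exact mem_product.2 ⟨mem_of_mem_erase hq'.1, mem_of_mem_erase hq'.2.1⟩
  simp only [irregularTriples, card_filter, sum_product (s := P) (t := P ×ˢ P)]
  exact sum_congr rfl fun A _ ↦ by rw [← card_filter, hpair A]

lemma card_irregularTriples_le (H : Finset (Finset V)) (ε : ℝ) (P : Finset (Finset V)) :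
    #(irregularTriples H ε P) ≤ #P ^ 3 :=
  (card_filter_le _ _).trans_eq (by rw [card_product, card_product, pow_succ', sq])

lemma exists_irregularity_witnesses (H : Finset (Finset V)) (ε : ℝ) (P : Finset (Finset V)) :
    ∃ W, P ⊆ W ∧ #W ≤ #P + 3 * #P ^ 3 ∧ ∀ A B C, (A, B, C) ∈ irregularTriples H ε P →
      ∃ A₁ ∈ W, ∃ A₂ ∈ W, ∃ A₃ ∈ W, IsIrregularityWitness H ε A B C A₁ A₂ A₃ := by
  have witnesses : ∀ p ∈ irregularTriples H ε P, ∃ w : Finset (Finset V), #w ≤ 3 ∧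
      ∃ A₁ ∈ w, ∃ A₂ ∈ w, ∃ A₃ ∈ w, IsIrregularityWitness H ε p.1 p.2.1 p.2.2 A₁ A₂ A₃ := by
    rintro ⟨A, B, C⟩ hp
    obtain ⟨-, -, -, -, -, -, hirr⟩ := mem_irregularTriples.1 hp
    obtain ⟨A₁, A₂, A₃, h⟩ := exists_isIrregularityWitness hirr
    exact ⟨{A₁, A₂, A₃}, card_le_three, A₁, by simp, A₂, by simp, A₃, by simp, h⟩
  choose! w hcard hw using witnesses
  refine ⟨P ∪ (irregularTriples H ε P).biUnion w, subset_union_left, ?_, fun A B C hp ↦ ?_⟩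
  · calc #(P ∪ (irregularTriples H ε P).biUnion w)
        ≤ #P + #(irregularTriples H ε P) * 3 :=
          (card_union_le _ _).trans <| by gcongr; exact card_biUnion_le_card_mul _ _ _ hcard
      _ ≤ #P + 3 * #P ^ 3 := by
          rw [mul_comm 3]; gcongr; exact card_irregularTriples_le H ε P
  · have hsub : w (A, B, C) ⊆ P ∪ (irregularTriples H ε P).biUnion w :=
      (subset_biUnion_of_mem w hp).trans subset_union_right
    obtain ⟨A₁, h₁, A₂, h₂, A₃, h₃, h⟩ := hw _ hp
    exact ⟨A₁, hsub h₁, A₂, hsub h₂, A₃, hsub h₃, h⟩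

variable [Fintype V]

/-- The `L²`-energy of `H` along the product partition of `V × V × V` induced by `P`. -/
noncomputable def energy (H P : Finset (Finset V)) : ℝ :=
  ∑ p, fiberAvg (cellTriple P) (edgeIndicator H) p ^ 2

lemma energy_nonneg (H P : Finset (Finset V)) : 0 ≤ energy H P :=
  sum_nonneg fun _ _ ↦ sq_nonneg _

lemma energy_le (H P : Finset (Finset V)) : energy H P ≤ (Fintype.card V : ℝ) ^ 3 :=
  calc energy H P ≤ ∑ p, edgeIndicator H p ^ 2 := sum_fiberAvg_sq_le _ _
    _ ≤ ∑ _p : V × V × V, 1 := sum_le_sum fun p _ ↦ by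
        unfold edgeIndicator
        split_ifs <;> norm_num
    _ = (Fintype.card V : ℝ) ^ 3 := by
        simp only [sum_const, card_univ, Fintype.card_prod, nsmul_eq_mul, mul_one]
        push_cast
        ring

lemma fiberAvg_cellTriple (hH : ∀ e ∈ H, #e = 3) (hP : (P : Set (Finset V)).PairwiseDisjoint id)
    (hA : A ∈ P) (hB : B ∈ P) (hC : C ∈ P) (hAB : A ≠ B) (hAC : A ≠ C) (hBC : B ≠ C)
    {p : V × V × V} (hp : p ∈ A ×ˢ B ×ˢ C) :
    fiberAvg (cellTriple P) (edgeIndicator H) p = triDensity H A B C := by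
  have hbox : ({q | cellTriple P q = cellTriple P p} : Finset _) = A ×ˢ B ×ˢ C := by
    ext q
    rw [mem_filter_univ, (cellTriple_eq_iff hP hA hB hC).2 hp, cellTriple_eq_iff hP hA hB hC]
  rw [fiberAvg, hbox]
  exact expect_edgeIndicator hH (hP hA hB hAB) (hP hA hC hAC) (hP hB hC hBC)

lemma pow_mul_pow_le_sum_of_isIrregularityWitness (hH : ∀ e ∈ H, #e = 3) (hε : 0 ≤ ε)
    (hP : IsEqualFamily P m) (hA : A ∈ P) (hB : B ∈ P) (hC : C ∈ P) (hAB : A ≠ B) (hAC : A ≠ C)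
    (hBC : B ≠ C) {A₁ A₂ A₃ : Finset V} (hw : IsIrregularityWitness H ε A B C A₁ A₂ A₃)
    (h₁ : A₁ ∈ W) (h₂ : A₂ ∈ W) (h₃ : A₃ ∈ W) (huncut : ∀ A ∈ P', IsUncutBy W A) :
    ε ^ 5 * (m : ℝ) ^ 3 ≤ ∑ p ∈ A ×ˢ B ×ˢ C, (fiberAvg (cellTriple P') (edgeIndicator H) p -
      fiberAvg (cellTriple P) (edgeIndicator H) p) ^ 2 := by
  have hsub : A₁ ×ˢ A₂ ×ˢ A₃ ⊆ A ×ˢ B ×ˢ C :=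
    product_subset_product hw.subset₁ (product_subset_product hw.subset₂ hw.subset₃)
  have hsat (p q) (hpq : cellTriple P' p = cellTriple P' q) :
      p ∈ A₁ ×ˢ A₂ ×ˢ A₃ ↔ q ∈ A₁ ×ˢ A₂ ×ˢ A₃ := by
    simp only [cellTriple, Prod.mk.injEq] at hpq
    simp only [mem_product, mem_iff_mem_of_cell_eq huncut h₁ hpq.1,
      mem_iff_mem_of_cell_eq huncut h₂ hpq.2.1, mem_iff_mem_of_cell_eq huncut h₃ hpq.2.2]
  have havg : 𝔼 p ∈ A₁ ×ˢ A₂ ×ˢ A₃, edgeIndicator H p = triDensity H A₁ A₂ A₃ :=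
    expect_edgeIndicator hH ((hP.disjoint hA hB hAB).mono hw.subset₁ hw.subset₂)
      ((hP.disjoint hA hC hAC).mono hw.subset₁ hw.subset₃)
      ((hP.disjoint hB hC hBC).mono hw.subset₂ hw.subset₃)
  have hcard : (ε * m) * ((ε * m) * (ε * m)) ≤ (#(A₁ ×ˢ A₂ ×ˢ A₃) : ℝ) := by
    have c₁ := hP.card_eq A hA ▸ hw.le_card₁
    have c₂ := hP.card_eq B hB ▸ hw.le_card₂
    have c₃ := hP.card_eq C hC ▸ hw.le_card₃
    rw [card_product, card_product, Nat.cast_mul, Nat.cast_mul]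
    gcongr
  calc ε ^ 5 * (m : ℝ) ^ 3 = (ε * m) * ((ε * m) * (ε * m)) * ε ^ 2 := by ring
    _ ≤ #(A₁ ×ˢ A₂ ×ˢ A₃) * (triDensity H A₁ A₂ A₃ - triDensity H A B C) ^ 2 := by
        gcongr ?_ * ?_
        exact sq_le_sq.2 ((abs_of_nonneg hε).trans_le hw.lt_abs_sub.le)
    _ ≤ _ := havg ▸ card_mul_sq_le_sum_fiberAvg_sub_sq
        (fun p hp ↦ fiberAvg_cellTriple hH hP.pairwiseDisjoint hA hB hC hAB hAC hBC (hsub hp)) hsat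
    _ ≤ _ := sum_le_sum_of_subset_of_nonneg hsub fun _ _ _ ↦ sq_nonneg _

lemma energy_add_le_energy (hH : ∀ e ∈ H, #e = 3) (hε : 0 ≤ ε) (hP : IsEqualFamily P m)
    (hPW : P ⊆ W) (hW : ∀ A B C, (A, B, C) ∈ irregularTriples H ε P →
      ∃ A₁ ∈ W, ∃ A₂ ∈ W, ∃ A₃ ∈ W, IsIrregularityWitness H ε A B C A₁ A₂ A₃)
    (hsub : ∀ A ∈ P', A ⊆ P.biUnion id) (huncut : ∀ A ∈ P', IsUncutBy W A) :
    energy H P + #(irregularTriples H ε P) * (ε ^ 5 * (m : ℝ) ^ 3) ≤ energy H P' := by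
  have hrefine := cellTriple_factorsThrough hP.pairwiseDisjoint hsub
    fun A hA w hw ↦ huncut A hA w (hPW hw)
  have pythagoras := sum_fiberAvg_sq_add_sum_sub_sq hrefine (edgeIndicator H)
  set g : V × V × V → ℝ := fun p ↦
    (fiberAvg (cellTriple P') (edgeIndicator H) p - fiberAvg (cellTriple P) (edgeIndicator H) p) ^ 2
  have hbox : ∀ T ∈ irregularTriples H ε P,
      ε ^ 5 * (m : ℝ) ^ 3 ≤ ∑ p with cellTriple P p = T, g p := by
    rintro ⟨A, B, C⟩ hT
    obtain ⟨hA, hB, hC, hAB, hAC, hBC, -⟩ := mem_irregularTriples.1 hT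
    obtain ⟨A₁, h₁, A₂, h₂, A₃, h₃, hw⟩ := hW A B C hT
    have hfib : ({p | cellTriple P p = (A, B, C)} : Finset _) = A ×ˢ B ×ˢ C := by
      ext p
      rw [mem_filter_univ, cellTriple_eq_iff hP.pairwiseDisjoint hA hB hC]
    rw [hfib]
    exact pow_mul_pow_le_sum_of_isIrregularityWitness hH hε hP hA hB hC hAB hAC hBC hw h₁ h₂ h₃
      huncut
  calc energy H P + #(irregularTriples H ε P) * (ε ^ 5 * (m : ℝ) ^ 3)
      ≤ energy H P + ∑ T ∈ irregularTriples H ε P, ∑ p with cellTriple P p = T, g p := by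
        rw [← nsmul_eq_mul]
        gcongr
        exact card_nsmul_le_sum _ _ _ hbox
    _ ≤ energy H P + ∑ p, g p := by
        gcongr
        exact sum_fiberwise_le_sum_of_sum_fiber_nonneg fun T _ ↦ sum_nonneg fun _ _ ↦ sq_nonneg _
    _ = energy H P' := pythagoras

end Energy

section Regularity

variable {V : Type} [Fintype V] [DecidableEq V] {H P W : Finset (Finset V)} {U : Finset V}
  {m k K L T : ℕ} {ε η : ℝ}

/-- Both the number of vertices needed to chop a set along `L` cuts with a loss of at most an
`η`-fraction of the vertices, and a bound for the number of pieces. -/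
noncomputable def chopBound (η : ℝ) (L : ℕ) : ℕ := ⌈2 ^ (L + 1) / η⌉₊

lemma exists_isEqualFamily_of_card_le (hη : 0 < η) (hW : #W ≤ L)
    (hn : chopBound η L ≤ Fintype.card V) (U : Finset V) :
    ∃ P m, IsEqualFamily P m ∧ (∀ A ∈ P, A ⊆ U) ∧ (∀ A ∈ P, IsUncutBy W A) ∧
      (#(U \ P.biUnion id) : ℝ) ≤ η * Fintype.card V ∧ #P ≤ chopBound η L ∧
      m ≤ η * Fintype.card V := by
  set n := (Fintype.card V : ℝ) with hn_eq
  have hn' : 2 ^ (L + 1) / η ≤ n := Nat.ceil_le.1 hn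
  have htwo : 2 ≤ η * n / 2 ^ L := by
    rw [div_le_iff₀ hη, pow_succ'] at hn'
    rw [le_div_iff₀ (by positivity)]
    linarith
  set m := ⌊η * n / 2 ^ L⌋₊
  have hm_le : (m : ℝ) ≤ η * n / 2 ^ L := Nat.floor_le (by linarith)
  have hm_gt : η * n / 2 ^ L / 2 < m := Nat.div_two_lt_floor (by linarith)
  have hm : (0 : ℝ) < m := by linarith
  obtain ⟨P, hP, hPU, hPW, hleft⟩ := exists_isEqualFamily_isUncutBy W (Nat.cast_pos.1 hm) U
  refine ⟨P, m, hP, hPU, hPW, ?_, ?_, hm_le.trans ?_⟩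
  · calc (#(U \ P.biUnion id) : ℝ) ≤ 2 ^ #W * m := by exact_mod_cast hleft
      _ ≤ 2 ^ L * m := by gcongr; norm_num
      _ ≤ η * n := by rwa [le_div_iff₀' (by positivity)] at hm_le
  · have hPm : (#P : ℝ) * m ≤ n := by
      rw [hn_eq]
      exact_mod_cast (Nat.le_add_right _ _).trans_eq hP.card_mul_add_card_leftover
    have hnm : n ≤ 2 ^ (L + 1) / η * m := by
      rw [div_div, div_lt_iff₀ (by positivity), ← pow_succ] at hm_gt
      rw [div_mul_eq_mul_div, le_div_iff₀ hη]
      linarith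
    exact Nat.cast_le.1 <| (le_of_mul_le_mul_right (hPm.trans hnm) hm).trans (Nat.le_ceil _)
  · exact div_le_self (by rw [hn_eq]; positivity) (one_le_pow₀ one_le_two)

/-- A bound for the number of clusters after `k` refinement steps. -/
noncomputable def partitionBound (η : ℝ) : ℕ → ℕ
  | 0 => chopBound η 0
  | k + 1 => max (partitionBound η k)
      (chopBound η (partitionBound η k + 3 * partitionBound η k ^ 3))

lemma partitionBound_mono (η : ℝ) : Monotone (partitionBound η) :=
  monotone_nat_of_le_succ fun _ ↦ le_max_left _ _

lemma partitionBound_pos (hη : 0 < η) (k : ℕ) : 0 < partitionBound η k :=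
  (Nat.ceil_pos.2 (by positivity)).trans_le (partitionBound_mono η k.zero_le)

namespace IsEqualFamily

lemma half_card_le (hP : IsEqualFamily P m) (h : (#(leftover P) : ℝ) ≤ Fintype.card V / 2) :
    (Fintype.card V / 2 : ℝ) ≤ #P * m := by
  have hsum : (#P * m + #(leftover P) : ℝ) = Fintype.card V := by
    exact_mod_cast hP.card_mul_add_card_leftover
  linarith

lemma one_le_two_mul_card (hP : IsEqualFamily P m)
    (h : (#(leftover P) : ℝ) ≤ Fintype.card V / 2) (hm : m ≤ η * Fintype.card V)
    (hn : 0 < Fintype.card V) : 1 ≤ 2 * η * #P := by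
  have hn' : (0 : ℝ) < Fintype.card V := Nat.cast_pos.2 hn
  have hle : (Fintype.card V / 2 : ℝ) ≤ #P * (η * Fintype.card V) :=
    (hP.half_card_le h).trans (by gcongr)
  exact le_of_mul_le_mul_right (by linarith) hn'

lemma exists_energy_increment (hH : ∀ e ∈ H, #e = 3) (hε : 0 ≤ ε) (hη : 0 < η)
    (hP : IsEqualFamily P m) (hT : #P ≤ T) (hhalf : (Fintype.card V / 2 : ℝ) ≤ #P * m)
    (hirr : ε * #P ^ 3 ≤ #(irregularTriples H ε P))
    (hn : chopBound η (T + 3 * T ^ 3) ≤ Fintype.card V) :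
    ∃ P' m', IsEqualFamily P' m' ∧
      (#(leftover P') : ℝ) ≤ #(leftover P) + η * Fintype.card V ∧
      #P' ≤ chopBound η (T + 3 * T ^ 3) ∧ m' ≤ η * Fintype.card V ∧
      energy H P + ε ^ 6 / 8 * (Fintype.card V : ℝ) ^ 3 ≤ energy H P' := by
  obtain ⟨W, hPW, hWcard, hW⟩ := exists_irregularity_witnesses H ε P
  have hWT : #W ≤ T + 3 * T ^ 3 := hWcard.trans (by gcongr)
  obtain ⟨P', m', hP', hsub, huncut, hlost, hcard, hm'⟩ :=
    exists_isEqualFamily_of_card_le hη hWT hn (P.biUnion id)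
  refine ⟨P', m', hP', ?_, hcard, hm', ?_⟩
  · have hcover : leftover P' ⊆ leftover P ∪ (P.biUnion id \ P'.biUnion id) := fun x hx ↦ by
      simp only [leftover, mem_union, mem_compl, mem_sdiff] at hx ⊢
      tauto
    calc (#(leftover P') : ℝ) ≤ #(leftover P) + #(P.biUnion id \ P'.biUnion id) := by
          exact_mod_cast (card_le_card hcover).trans (card_union_le _ _)
      _ ≤ #(leftover P) + η * Fintype.card V := by gcongr
  · calc energy H P + ε ^ 6 / 8 * (Fintype.card V : ℝ) ^ 3
        = energy H P + ε ^ 6 * (Fintype.card V / 2 : ℝ) ^ 3 := by ring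
      _ ≤ energy H P + ε ^ 6 * (#P * m : ℝ) ^ 3 := by gcongr
      _ = energy H P + ε * #P ^ 3 * (ε ^ 5 * (m : ℝ) ^ 3) := by ring
      _ ≤ energy H P + #(irregularTriples H ε P) * (ε ^ 5 * (m : ℝ) ^ 3) := by gcongr
      _ ≤ energy H P' := energy_add_le_energy hH hε hP hPW hW hsub huncut

end IsEqualFamily

/-- The clusters `P` form an `ε`-regular partition, with the irregular triples counted relative to
`#P ^ 3`. -/
structure IsRegularFamily (H : Finset (Finset V)) (ε : ℝ) (P : Finset (Finset V)) (m : ℕ) :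
    Prop extends IsEqualFamily P m where
  card_leftover_le : (#(leftover P) : ℝ) ≤ ε * Fintype.card V
  card_irregularTriples_le : (#(irregularTriples H ε P) : ℝ) ≤ ε * #P ^ 3

/-- The invariants of the clusters `P` obtained after `k` steps of the energy increment
argument. -/
structure IsIncrementStage (H : Finset (Finset V)) (ε η : ℝ) (k : ℕ) (P : Finset (Finset V))
    (m : ℕ) : Prop extends IsEqualFamily P m where
  one_le_two_mul_card : 1 ≤ 2 * η * #P
  card_le : #P ≤ partitionBound η k
  card_leftover_le : (#(leftover P) : ℝ) ≤ (k + 1) * η * Fintype.card V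
  le_energy : k * (ε ^ 6 / 8 * (Fintype.card V : ℝ) ^ 3) ≤ energy H P

lemma exists_isIncrementStage_zero (H : Finset (Finset V)) (ε : ℝ) (hη : 0 < η) (hη' : η ≤ 1 / 2)
    (hn : partitionBound η 0 ≤ Fintype.card V) : ∃ P m, IsIncrementStage H ε η 0 P m := by
  obtain ⟨P, m, hP, -, -, hleft, hcard, hm⟩ :=
    exists_isEqualFamily_of_card_le (W := ∅) hη card_empty.le hn univ
  rw [← compl_eq_univ_sdiff, ← leftover] at hleft
  have hhalf : η * (Fintype.card V : ℝ) ≤ Fintype.card V / 2 := by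
    rw [div_eq_inv_mul, ← one_div]
    gcongr
  exact ⟨P, m, hP, hP.one_le_two_mul_card (hleft.trans hhalf) hm
    ((partitionBound_pos hη 0).trans_le hn), hcard, by simpa using hleft,
    by simpa using energy_nonneg H P⟩

lemma IsIncrementStage.exists_succ (hH : ∀ e ∈ H, #e = 3) (hε : 0 ≤ ε) (hη : 0 < η)
    (hkη : (k + 2) * η ≤ 1 / 2) (hn : partitionBound η (k + 1) ≤ Fintype.card V)
    (hP : IsIncrementStage H ε η k P m) (hirr : ε * #P ^ 3 ≤ #(irregularTriples H ε P)) :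
    ∃ P' m', IsIncrementStage H ε η (k + 1) P' m' := by
  have hhalf : (k + 2) * η * (Fintype.card V : ℝ) ≤ Fintype.card V / 2 := by
    rw [div_eq_inv_mul, ← one_div]
    gcongr
  have hη_n : 0 ≤ η * (Fintype.card V : ℝ) := by positivity
  obtain ⟨P', m', hP', hleft, hcard, hm', henergy⟩ :=
    hP.exists_energy_increment hH hε hη hP.card_le
      (hP.half_card_le (by linarith [hP.card_leftover_le])) hirr ((le_max_right _ _).trans hn)
  have hleft' : (#(leftover P') : ℝ) ≤ (k + 2) * η * Fintype.card V := by
    linarith [hP.card_leftover_le]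
  refine ⟨P', m', hP', hP'.one_le_two_mul_card (hleft'.trans hhalf) hm'
    ((partitionBound_pos hη _).trans_le hn), hcard.trans (le_max_right _ _), ?_, ?_⟩ <;> push_cast
  · linarith
  · linarith [hP.le_energy]

lemma exists_isRegularFamily_of_partitionBound_le (hH : ∀ e ∈ H, #e = 3) (hε : 0 < ε)
    (hε' : ε ≤ 1 / 2) (hη : 0 < η) (hK : 8 < K * ε ^ 6) (hKη : (K + 1) * η ≤ ε)
    (hn : partitionBound η K ≤ Fintype.card V) :
    ∃ P m, IsRegularFamily H ε P m ∧ 1 ≤ 2 * η * #P ∧ #P ≤ partitionBound η K := by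
  have hmono {k : ℕ} (hk : k ≤ K) : (k + 1) * η ≤ ε := le_trans (by gcongr) hKη
  by_contra! hirregular
  have stage : ∀ k ≤ K, ∃ P m, IsIncrementStage H ε η k P m := by
    intro k hk
    induction k with
    | zero =>
      refine exists_isIncrementStage_zero H ε hη ?_ ((partitionBound_mono η hk).trans hn)
      simpa using (hmono hk).trans hε'
    | succ k ih =>
      obtain ⟨P, m, hP⟩ := ih (Nat.le_of_succ_le hk)
      have hkη := hmono hk
      push_cast at hkη
      refine hP.exists_succ hH hε.le hη (by linarith) ((partitionBound_mono η hk).trans hn) ?_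
      have hPK := hP.card_le.trans (partitionBound_mono η (Nat.le_of_succ_le hk))
      by_contra! hreg
      refine (hirregular P m ⟨hP.toIsEqualFamily, hP.card_leftover_le.trans ?_, hreg.le⟩
        hP.one_le_two_mul_card).not_ge hPK
      exact mul_le_mul_of_nonneg_right (hmono (Nat.le_of_succ_le hk)) (Nat.cast_nonneg _)
  obtain ⟨P, m, hP⟩ := stage K le_rfl
  have hn_pos : (0 : ℝ) < (Fintype.card V : ℝ) ^ 3 :=
    pow_pos (Nat.cast_pos.2 ((partitionBound_pos hη K).trans_le hn)) 3
  nlinarith [hP.le_energy, energy_le H P]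

theorem exists_isRegularFamily (hε : 0 < ε) (hε' : ε ≤ 1 / 2) (t₁ : ℕ) :
    ∃ T, ∀ (V : Type) [Fintype V] [DecidableEq V] (H : Finset (Finset V)), (∀ e ∈ H, #e = 3) →
      T ≤ Fintype.card V → ∃ P m, IsRegularFamily H ε P m ∧ t₁ ≤ #P ∧ #P ≤ T := by
  obtain ⟨K, hK⟩ := exists_nat_gt (8 / ε ^ 6)
  obtain ⟨η, hη, hηε, hηt⟩ : ∃ η : ℝ, 0 < η ∧ η ≤ ε / (K + 1) ∧ η ≤ 1 / (2 * (t₁ + 1)) :=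
    ⟨min (ε / (K + 1)) (1 / (2 * (t₁ + 1))), by positivity, min_le_left _ _, min_le_right _ _⟩
  rw [div_lt_iff₀ (by positivity)] at hK
  rw [le_div_iff₀' (by positivity)] at hηε hηt
  refine ⟨partitionBound η K, fun V _ _ H hH hn ↦ ?_⟩
  obtain ⟨P, m, hP, hlower, hupper⟩ :=
    exists_isRegularFamily_of_partitionBound_le hH hε hε' hη hK hηε hn
  refine ⟨P, m, hP, ?_, hupper⟩
  have : (t₁ + 1 : ℝ) ≤ #P := le_of_mul_le_mul_left (by linarith) hη
  exact_mod_cast (le_add_of_nonneg_right zero_le_one).trans this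

end Regularity

section Deletion

variable {V : Type} [DecidableEq V] {H P Q : Finset (Finset V)} {A : Finset V} {ε ε' α : ℝ}

lemma irregularPairs_subset (hε : ε' ≤ ε) (hQP : Q ⊆ P) :
    irregularPairs H ε Q A ⊆ irregularPairs H ε' P A := fun q hq ↦ by
  rw [mem_irregularPairs] at hq ⊢
  exact ⟨offDiag_mono (erase_subset_erase A hQP) hq.1, fun h ↦ hq.2 (h.mono hε)⟩

lemma card_filter_lt_card_irregularPairs_le (hα : 0 < α)
    (h : (#(irregularTriples H ε P) : ℝ) ≤ α ^ 2 * #P ^ 3) :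
    (#{A ∈ P | α * #P ^ 2 < #(irregularPairs H ε P A)} : ℝ) ≤ α * #P := by
  obtain rfl | hne := P.eq_empty_or_nonempty
  · simp
  have hP : (0 : ℝ) < #P := Nat.cast_pos.2 hne.card_pos
  refine le_of_mul_le_mul_right ?_ (mul_pos hα (pow_pos hP 2))
  calc (#{A ∈ P | α * #P ^ 2 < #(irregularPairs H ε P A)} : ℝ) * (α * #P ^ 2)
      ≤ ∑ A ∈ P with α * #P ^ 2 < #(irregularPairs H ε P A), (#(irregularPairs H ε P A) : ℝ) := by
        rw [← nsmul_eq_mul]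
        exact card_nsmul_le_sum _ _ _ fun A hA ↦ (mem_filter.1 hA).2.le
    _ ≤ ∑ A ∈ P, (#(irregularPairs H ε P A) : ℝ) :=
        sum_le_sum_of_subset_of_nonneg (filter_subset _ _) fun _ _ _ ↦ Nat.cast_nonneg _
    _ = #(irregularTriples H ε P) := by rw [card_irregularTriples, Nat.cast_sum]
    _ ≤ α * #P * (α * #P ^ 2) := h.trans_eq (by ring)

/-- A regular partition with clusters `Q` in which every cluster, not merely the average one, lies
in few irregular triples. -/
structure IsLocallyRegularFamily [Fintype V] (H : Finset (Finset V)) (ε : ℝ)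
    (Q : Finset (Finset V)) (m : ℕ) : Prop extends IsEqualFamily Q m where
  card_leftover_le : (#(leftover Q) : ℝ) ≤ ε * Fintype.card V
  card_irregularPairs_le : ∀ A ∈ Q, (#(irregularPairs H ε Q A) : ℝ) ≤ ε * #Q ^ 2

lemma IsRegularFamily.exists_isLocallyRegularFamily [Fintype V] {m : ℕ} (hα : 0 < α)
    (hα' : α ≤ 1 / 4) (hP : IsRegularFamily H (α ^ 2) P m) :
    ∃ Q, IsLocallyRegularFamily H (4 * α) Q m ∧ #P ≤ 2 * #Q ∧ #Q ≤ #P := by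
  set bad := {A ∈ P | α * #P ^ 2 < #(irregularPairs H (α ^ 2) P A)} with hbad_eq
  have hbad : (#bad : ℝ) ≤ α * #P :=
    card_filter_lt_card_irregularPairs_le hα hP.card_irregularTriples_le
  have hcard : (#(P \ bad) + #bad : ℝ) = #P := by
    exact_mod_cast card_sdiff_add_card_eq_card (filter_subset _ _)
  have hhalf : (#P : ℝ) ≤ 2 * #(P \ bad) := by nlinarith [(Nat.cast_nonneg #P : (0 : ℝ) ≤ #P)]
  refine ⟨P \ bad, ⟨hP.subset sdiff_subset, ?_, fun A hA ↦ ?_⟩, by exact_mod_cast hhalf,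
    card_le_card sdiff_subset⟩
  · have hPn : (#P * m + #(leftover P) : ℝ) = Fintype.card V := by
      exact_mod_cast hP.card_mul_add_card_leftover
    have hQn : (#(P \ bad) * m + #(leftover (P \ bad)) : ℝ) = Fintype.card V := by
      exact_mod_cast (hP.subset sdiff_subset).card_mul_add_card_leftover
    calc (#(leftover (P \ bad)) : ℝ) = #(leftover P) + #bad * m := by
          rw [← hcard] at hPn
          linarith
      _ ≤ α ^ 2 * Fintype.card V + α * #P * m := by
          gcongr
          exact hP.card_leftover_le
      _ ≤ α ^ 2 * Fintype.card V + α * Fintype.card V := by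
          rw [mul_assoc α]
          gcongr
          exact hPn ▸ le_add_of_nonneg_right (Nat.cast_nonneg _)
      _ = (α + 1) * α * Fintype.card V := by ring
      _ ≤ 4 * α * Fintype.card V := by gcongr; linarith
  · have hgood : (#(irregularPairs H (α ^ 2) P A) : ℝ) ≤ α * #P ^ 2 := by
      rw [hbad_eq, mem_sdiff, mem_filter] at hA
      exact not_lt.1 fun h ↦ hA.2 ⟨hA.1, h⟩
    calc (#(irregularPairs H (4 * α) (P \ bad) A) : ℝ) ≤ #(irregularPairs H (α ^ 2) P A) := by
          gcongr
          exact irregularPairs_subset (by nlinarith) sdiff_subset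
      _ ≤ α * (2 * #(P \ bad)) ^ 2 := hgood.trans (by gcongr)
      _ = 4 * α * #(P \ bad) ^ 2 := by ring

theorem exists_isLocallyRegularFamily (hε : 0 < ε) (hε' : ε ≤ 1) (t₀ : ℕ) :
    ∃ T, ∀ (V : Type) [Fintype V] [DecidableEq V] (H : Finset (Finset V)), (∀ e ∈ H, #e = 3) →
      T ≤ Fintype.card V → ∃ Q m, IsLocallyRegularFamily H ε Q m ∧ t₀ ≤ #Q ∧ #Q ≤ T := by
  obtain ⟨α, rfl⟩ : ∃ α, ε = 4 * α := ⟨ε / 4, by ring⟩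
  have hα : 0 < α := by linarith
  have hα' : α ≤ 1 / 4 := by linarith
  obtain ⟨T, hT⟩ := exists_isRegularFamily (ε := α ^ 2) (by positivity) (by nlinarith) (2 * t₀)
  refine ⟨T, fun V _ _ H hH hn ↦ ?_⟩
  obtain ⟨P, m, hP, hlower, hupper⟩ := hT V H hH hn
  obtain ⟨Q, hQ, hPQ, hQP⟩ := hP.exists_isLocallyRegularFamily hα hα'
  exact ⟨Q, m, hQ, by lia, hQP.trans hupper⟩

end Deletion

section DegreeCounting

variable {V : Type} [DecidableEq V] {H Q : Finset (Finset V)} {A B C : Finset V} {m : ℕ}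
  {ε β d δ : ℝ}

lemma two_mul_degree_le [Fintype V] (hH : ∀ e ∈ H, #e = 3) (v : V) :
    2 * #{e ∈ H | v ∈ e} ≤ #{q : V × V | {v, q.1, q.2} ∈ H} := by
  have hmaps : ∀ q ∈ ({q : V × V | {v, q.1, q.2} ∈ H} : Finset _),
      {v, q.1, q.2} ∈ {e ∈ H | v ∈ e} := fun q hq ↦
    mem_filter.2 ⟨(mem_filter_univ q).1 hq, mem_insert_self _ _⟩
  rw [card_eq_sum_card_fiberwise hmaps, mul_comm, ← smul_eq_mul]
  refine card_nsmul_le_sum _ _ _ fun e he ↦ ?_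
  obtain ⟨heH, hve⟩ := mem_filter.1 he
  obtain ⟨a, b, hab, heq⟩ := card_eq_two.1 (by rw [card_erase_of_mem hve, hH e heH] :
    #(e.erase v) = 2)
  have hvab : {v, a, b} = e := by rw [← insert_erase hve, heq]
  have hvba : {v, b, a} = e := by rw [← hvab, pair_comm]
  rw [← card_pair (by simp [hab] : (a, b) ≠ (b, a))]
  refine card_le_card (insert_subset ?_ (singleton_subset_iff.2 ?_)) <;>
    simp [hvab, hvba, heH]

lemma sum_card_filter_mem_eq_eCross (hH : ∀ e ∈ H, #e = 3) (hAB : Disjoint A B)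
    (hAC : Disjoint A C) (hBC : Disjoint B C) :
    ∑ v ∈ A, #{q ∈ B ×ˢ C | {v, q.1, q.2} ∈ H} = eCross H A B C := by
  simp only [eCross_eq_card_filter hH hAB hAC hBC, card_filter, sum_product (s := A) (t := B ×ˢ C)]

/-- The ordered pairs of vertices in different members of `Q`. -/
def crossingPairs (Q : Finset (Finset V)) : Finset (V × V) :=
  Q.offDiag.biUnion fun q ↦ q.1 ×ˢ q.2

lemma card_compl_crossingPairs_le [Fintype V] (hQ : IsEqualFamily Q m) :
    #(crossingPairs Q)ᶜ ≤ (2 * #(leftover Q) + m) * Fintype.card V := by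
  have hcover : (crossingPairs Q)ᶜ ⊆
      leftover Q ×ˢ univ ∪ univ ×ˢ leftover Q ∪ Q.biUnion fun B ↦ B ×ˢ B := by
    rintro ⟨y, z⟩ hyz
    simp only [crossingPairs, leftover, mem_compl, mem_union, mem_product, mem_biUnion, mem_univ,
      mem_offDiag, id, Prod.exists] at hyz ⊢
    grind
  have hdiag : #(Q.biUnion fun B ↦ B ×ˢ B) ≤ m * Fintype.card V :=
    calc #(Q.biUnion fun B ↦ B ×ˢ B) ≤ #Q * (m * m) :=
          card_biUnion_le_card_mul _ _ _ fun B hB ↦ by rw [card_product, hQ.card_eq B hB]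
      _ = m * (#Q * m) := by ring
      _ ≤ m * Fintype.card V := by
          gcongr
          exact (Nat.le_add_right _ _).trans_eq hQ.card_mul_add_card_leftover
  calc #(crossingPairs Q)ᶜ
      ≤ #(leftover Q ×ˢ (univ : Finset V)) + #((univ : Finset V) ×ˢ leftover Q) +
          #(Q.biUnion fun B ↦ B ×ˢ B) := (card_le_card hcover).trans <|
        (card_union_le _ _).trans <| by gcongr; exact card_union_le _ _
    _ ≤ #(leftover Q) * Fintype.card V + Fintype.card V * #(leftover Q) + m * Fintype.card V := by
        gcongr <;> simp only [card_product, card_univ, le_refl]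
    _ = (2 * #(leftover Q) + m) * Fintype.card V := by ring

lemma card_link_le [Fintype V] (H Q : Finset (Finset V)) (v : V) :
    #{q : V × V | {v, q.1, q.2} ∈ H} ≤
      #(crossingPairs Q)ᶜ + ∑ p ∈ Q.offDiag, #{q ∈ p.1 ×ˢ p.2 | {v, q.1, q.2} ∈ H} := by
  rw [← card_filter_add_card_filter_not (s := {q : V × V | {v, q.1, q.2} ∈ H})
    (· ∈ crossingPairs Q), add_comm]
  gcongr
  · exact fun q hq ↦ mem_compl.2 (mem_filter.1 hq).2
  · refine le_trans (card_le_card fun q hq ↦ ?_) card_biUnion_le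
    simp only [crossingPairs, mem_filter, mem_biUnion, mem_univ, true_and] at hq ⊢
    obtain ⟨hqH, p, hp, hqp⟩ := hq
    exact ⟨p, hp, hqp, hqH⟩

lemma IsEqualFamily.card_leftover_erase [Fintype V] (hQ : IsEqualFamily Q m) (hA : A ∈ Q) :
    #(leftover (Q.erase A)) = #(leftover Q) + m := by
  have h := (hQ.subset (erase_subset A Q)).card_mul_add_card_leftover
  rw [← hQ.card_mul_add_card_leftover, ← card_erase_add_one hA, add_mul, one_mul] at h
  lia

lemma two_mul_sum_degree_le [Fintype V] (hH : ∀ e ∈ H, #e = 3) (hQ : IsEqualFamily Q m)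
    (hA : A ∈ Q) :
    2 * ∑ v ∈ A, #{e ∈ H | v ∈ e} ≤ m * ((2 * #(leftover Q) + 3 * m) * Fintype.card V) +
      ∑ q ∈ (Q.erase A).offDiag, eCross H A q.1 q.2 := by
  have hcross (q) (hq : q ∈ (Q.erase A).offDiag) :
      ∑ v ∈ A, #{r ∈ q.1 ×ˢ q.2 | {v, r.1, r.2} ∈ H} = eCross H A q.1 q.2 := by
    simp only [mem_offDiag, mem_erase] at hq
    obtain ⟨⟨h₁A, h₁⟩, ⟨h₂A, h₂⟩, h₁₂⟩ := hq
    exact sum_card_filter_mem_eq_eCross hH (hQ.disjoint hA h₁ h₁A.symm)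
      (hQ.disjoint hA h₂ h₂A.symm) (hQ.disjoint h₁ h₂ h₁₂)
  have hnoncrossing := card_compl_crossingPairs_le (hQ.subset (erase_subset A Q))
  rw [hQ.card_leftover_erase hA] at hnoncrossing
  calc 2 * ∑ v ∈ A, #{e ∈ H | v ∈ e}
      ≤ ∑ v ∈ A, (#(crossingPairs (Q.erase A))ᶜ +
          ∑ q ∈ (Q.erase A).offDiag, #{r ∈ q.1 ×ˢ q.2 | {v, r.1, r.2} ∈ H}) := by
        rw [mul_sum]
        exact sum_le_sum fun v _ ↦ (two_mul_degree_le hH v).trans (card_link_le H _ v)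
    _ = m * #(crossingPairs (Q.erase A))ᶜ + ∑ q ∈ (Q.erase A).offDiag, eCross H A q.1 q.2 := by
        rw [sum_add_distrib, sum_const, smul_eq_mul, hQ.card_eq A hA, sum_comm,
          sum_congr rfl hcross]
    _ ≤ _ := by
        gcongr
        exact hnoncrossing.trans_eq (by ring)

open Classical in
/-- The ordered pairs of clusters that form an edge of `K(ε, d, Q)` together with `A`; their number
is twice the degree of `A`. -/
noncomputable def clusterPairs (H : Finset (Finset V)) (ε d : ℝ) (Q : Finset (Finset V))
    (A : Finset V) : Finset (Finset V × Finset V) :=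
  {q ∈ (Q.erase A).offDiag | ClusterEdge H ε d A q.1 q.2}

lemma mem_clusterPairs {q : Finset V × Finset V} : q ∈ clusterPairs H ε d Q A ↔
    q ∈ (Q.erase A).offDiag ∧ ClusterEdge H ε d A q.1 q.2 := by
  classical exact mem_filter

lemma card_offDiag_erase_le (hA : A ∈ Q) : (#(Q.erase A).offDiag : ℝ) ≤ #Q * (#Q - 1) := by
  have h : (#(Q.erase A) : ℝ) + 1 = #Q := by exact_mod_cast card_erase_add_one hA
  rw [offDiag_card, Nat.cast_sub (Nat.le_mul_self _), ← h]
  push_cast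
  nlinarith [(Nat.cast_nonneg #(Q.erase A) : (0 : ℝ) ≤ _)]

lemma sum_triDensity_le (hH : ∀ e ∈ H, #e = 3) (hQ : IsEqualFamily Q m) (hA : A ∈ Q)
    (hd : 0 ≤ d) :
    ∑ q ∈ (Q.erase A).offDiag, triDensity H A q.1 q.2 ≤
      #(clusterPairs H ε d Q A) + #(irregularPairs H ε Q A) + d * (#Q * (#Q - 1)) := by
  classical
  have hterm (q) (hq : q ∈ (Q.erase A).offDiag) : triDensity H A q.1 q.2 ≤
      (if ClusterEdge H ε d A q.1 q.2 then 1 else 0) +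
        (if ¬ EpsRegTriple H ε A q.1 q.2 then 1 else 0) + d := by
    simp only [mem_offDiag, mem_erase] at hq
    obtain ⟨⟨h₁A, h₁⟩, ⟨h₂A, h₂⟩, h₁₂⟩ := hq
    have hle := triDensity_le_one hH (hQ.disjoint hA h₁ h₁A.symm) (hQ.disjoint hA h₂ h₂A.symm)
      (hQ.disjoint h₁ h₂ h₁₂)
    by_cases hreg : EpsRegTriple H ε A q.1 q.2 <;> by_cases hdense : d ≤ triDensity H A q.1 q.2 <;>
      simp only [ClusterEdge, hreg, hdense, not_true, not_false_eq_true, and_self, and_false,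
        false_and, if_true, if_false] <;> linarith
  refine (sum_le_sum hterm).trans ?_
  rw [sum_add_distrib, sum_add_distrib, sum_boole, sum_boole, sum_const, nsmul_eq_mul, mul_comm _ d,
    clusterPairs, irregularPairs]
  gcongr
  exact card_offDiag_erase_le hA

lemma IsEqualFamily.eCross_eq (hQ : IsEqualFamily Q m) (hA : A ∈ Q) (hB : B ∈ Q) (hC : C ∈ Q) :
    (eCross H A B C : ℝ) = m ^ 3 * triDensity H A B C := by
  have hm : (m : ℝ) ≠ 0 := by exact_mod_cast hQ.pos.ne'
  rw [triDensity, hQ.card_eq A hA, hQ.card_eq B hB, hQ.card_eq C hC]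
  field_simp

lemma degree_condition_le [Fintype V] (hH : ∀ e ∈ H, #e = 3) (hQ : IsEqualFamily Q m) (hA : A ∈ Q)
    (hd : 0 ≤ d) (hδ : ∀ v, δ * (Fintype.card V).choose 2 ≤ #{e ∈ H | v ∈ e}) :
    δ * (Fintype.card V * (Fintype.card V - 1)) ≤
      (2 * #(leftover Q) + 3 * m) * Fintype.card V +
        m ^ 2 * (#(clusterPairs H ε d Q A) + #(irregularPairs H ε Q A) + d * (#Q * (#Q - 1))) := by
  have hm : (0 : ℝ) < m := Nat.cast_pos.2 hQ.pos
  have hcross : ∑ q ∈ (Q.erase A).offDiag, (eCross H A q.1 q.2 : ℝ) =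
      m ^ 3 * ∑ q ∈ (Q.erase A).offDiag, triDensity H A q.1 q.2 := by
    rw [mul_sum]
    refine sum_congr rfl fun q hq ↦ ?_
    simp only [mem_offDiag, mem_erase] at hq
    exact hQ.eCross_eq hA hq.1.2 hq.2.1.2
  refine le_of_mul_le_mul_left ?_ hm
  calc m * (δ * (Fintype.card V * (Fintype.card V - 1)))
      = 2 * ∑ _v ∈ A, δ * (Fintype.card V).choose 2 := by
        rw [sum_const, hQ.card_eq A hA, Nat.cast_choose_two, nsmul_eq_mul]
        ring
    _ ≤ 2 * ∑ v ∈ A, (#{e ∈ H | v ∈ e} : ℝ) := by gcongr; exact hδ _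
    _ ≤ m * ((2 * #(leftover Q) + 3 * m) * Fintype.card V) +
          m ^ 3 * ∑ q ∈ (Q.erase A).offDiag, triDensity H A q.1 q.2 := by
        rw [← hcross]
        exact_mod_cast two_mul_sum_degree_le hH hQ hA
    _ ≤ m * ((2 * #(leftover Q) + 3 * m) * Fintype.card V) +
          m ^ 3 * (#(clusterPairs H ε d Q A) + #(irregularPairs H ε Q A) +
            d * (#Q * (#Q - 1))) := by
        gcongr
        exact sum_triDensity_le hH hQ hA hd
    _ = _ := by ring

/-- Here `s` clusters of size `m` and `L` exceptional vertices make up the `n` vertices, and a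
given cluster lies in `b` irregular and `E` dense regular ordered pairs. -/
lemma cluster_degree_arith {m s n L b E : ℝ} (hm : 1 ≤ m) (hs : 2 ≤ s) (hδ : 0 ≤ δ) (hβ : 0 ≤ β)
    (hn : s * m + L = n) (hL : 0 ≤ L) (hLn : L ≤ β * n) (hb : b ≤ β * s ^ 2) (hβ' : β ≤ 1 / 2)
    (hβε : 36 * β ≤ ε) (hεs : 24 ≤ ε * s)
    (h : δ * (n * (n - 1)) ≤ (2 * L + 3 * m) * n + m ^ 2 * (E + b + d * (s * (s - 1)))) :
    (δ - ε - d) * (s * (s - 1)) ≤ E := by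
  have hm₀ : 0 < m := by linarith
  have hn₀ : 0 ≤ n := by nlinarith
  have hn₂ : n ≤ 2 * s * m := by nlinarith
  have hdeg : m ^ 2 * (δ * (s * (s - 1))) ≤ δ * (n * (n - 1)) :=
    calc m ^ 2 * (δ * (s * (s - 1))) = δ * (s * m * (s * m - m)) := by ring
      _ ≤ δ * (n * (n - 1)) := by gcongr <;> nlinarith
  have herror : (2 * L + 3 * m) * n ≤ m ^ 2 * (8 * β * s ^ 2 + 6 * s) :=
    calc (2 * L + 3 * m) * n ≤ (2 * (β * n) + 3 * m) * n := by gcongr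
      _ ≤ (2 * (β * (2 * s * m)) + 3 * m) * (2 * s * m) := by gcongr
      _ = m ^ 2 * (8 * β * s ^ 2 + 6 * s) := by ring
  have hscaled : δ * (s * (s - 1)) ≤ 8 * β * s ^ 2 + 6 * s + (E + b + d * (s * (s - 1))) :=
    le_of_mul_le_mul_left (hdeg.trans <| h.trans <| by linarith) (pow_pos hm₀ 2)
  have habsorb : 8 * β * s ^ 2 + 6 * s + β * s ^ 2 ≤ ε * (s * (s - 1)) := by nlinarith
  linarith

lemma IsLocallyRegularFamily.le_card_clusterPairs [Fintype V] (hH : ∀ e ∈ H, #e = 3)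
    (hQ : IsLocallyRegularFamily H β Q m) (hβ : 0 ≤ β) (hβ' : β ≤ 1 / 2) (hβε : 36 * β ≤ ε)
    (hQ₂ : 2 ≤ #Q) (hεQ : 24 ≤ ε * #Q) (hd : 0 ≤ d)
    (hδ : ∀ v, δ * (Fintype.card V).choose 2 ≤ #{e ∈ H | v ∈ e}) (hA : A ∈ Q) :
    (δ - ε - d) * (#Q * (#Q - 1)) ≤ #(clusterPairs H ε d Q A) := by
  have hQ₂' : (2 : ℝ) ≤ #Q := by exact_mod_cast hQ₂
  obtain hδ₀ | hδ₀ := lt_or_ge δ 0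
  · have hneg : δ - ε - d ≤ 0 := by linarith
    exact (mul_nonpos_of_nonpos_of_nonneg hneg (by nlinarith)).trans (Nat.cast_nonneg _)
  have hn : (#Q * m + #(leftover Q) : ℝ) = Fintype.card V := by
    exact_mod_cast hQ.card_mul_add_card_leftover
  have hirr : (#(irregularPairs H ε Q A) : ℝ) ≤ β * #Q ^ 2 :=
    (by gcongr; exact irregularPairs_subset (by linarith) Subset.rfl : _ ≤ _).trans
      (hQ.card_irregularPairs_le A hA)
  exact cluster_degree_arith (Nat.one_le_cast.2 hQ.pos) hQ₂' hδ₀ hβ hn (Nat.cast_nonneg _)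
    hQ.card_leftover_le hirr hβ' hβε hεQ
    (degree_condition_le hH hQ.toIsEqualFamily hA hd hδ)

lemma pow_three_div_le_choose {t : ℕ} (ht : 4 ≤ t) : (t : ℝ) ^ 3 / 24 ≤ t.choose 3 := by
  have hrec : (t.choose 3 * 3 : ℝ) = t * (t - 1) / 2 * (t - 2) := by
    have hsub : ((t - 2 : ℕ) : ℝ) = t - 2 := Nat.cast_sub (by lia)
    rw [← Nat.cast_choose_two, ← hsub]
    exact_mod_cast Nat.choose_succ_right_eq t 2
  have ht' : (4 : ℝ) ≤ t := by exact_mod_cast ht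
  have hquad : (t : ℝ) * (t ^ 2 / 4) ≤ t * ((t - 1) * (t - 2)) := by gcongr; nlinarith
  linarith

lemma IsLocallyRegularFamily.card_irregularTriples_le [Fintype V]
    (hQ : IsLocallyRegularFamily H β Q m) (hε : 0 ≤ ε) (hβε : 36 * β ≤ ε) (hQ₄ : 4 ≤ #Q) :
    (#(irregularTriples H ε Q) : ℝ) ≤ ε * (#Q).choose 3 :=
  calc (#(irregularTriples H ε Q) : ℝ) = ∑ A ∈ Q, (#(irregularPairs H ε Q A) : ℝ) := by
        rw [card_irregularTriples, Nat.cast_sum]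
    _ ≤ ∑ A ∈ Q, (#(irregularPairs H β Q A) : ℝ) := by
        gcongr
        exact irregularPairs_subset (by linarith) Subset.rfl
    _ ≤ #Q * (β * #Q ^ 2) := by
        rw [← nsmul_eq_mul]
        exact sum_le_card_nsmul _ _ _ hQ.card_irregularPairs_le
    _ ≤ ε * (#Q ^ 3 / 24) := by nlinarith [(by positivity : (0 : ℝ) ≤ #Q ^ 3)]
    _ ≤ ε * (#Q).choose 3 := by gcongr; exact pow_three_div_le_choose hQ₄

end DegreeCounting

section Enumeration

variable {V : Type} [DecidableEq V] {H : Finset (Finset V)} {ε β d δ : ℝ} {t m : ℕ}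
  {Vs : Fin t → Finset V}

/-- `(ε, t)`-regular partitions: `V₀` is the exceptional class and `Vs` enumerates the clusters. -/
structure IsRegularPartition [Fintype V] (H : Finset (Finset V)) (ε : ℝ) (V₀ : Finset V)
    (Vs : Fin t → Finset V) : Prop where
  disjoint_exceptional : ∀ i, Disjoint V₀ (Vs i)
  disjoint : ∀ i j, i ≠ j → Disjoint (Vs i) (Vs j)
  union_eq_univ : V₀ ∪ univ.biUnion Vs = univ
  card_eq : ∀ i j, #(Vs i) = #(Vs j)
  card_exceptional_le : (#V₀ : ℝ) ≤ ε * Fintype.card V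
  ncard_irregular_le : ({p : Fin t × Fin t × Fin t | p.1 < p.2.1 ∧ p.2.1 < p.2.2 ∧
    ¬ EpsRegTriple H ε (Vs p.1) (Vs p.2.1) (Vs p.2.2)}.ncard : ℝ) ≤ ε * t.choose 3

/-- The degree of the vertex `i` in the cluster hypergraph `K(ε, d, Q)`, where `Vs` enumerates
`Q`; a pair of further vertices is listed in increasing order. -/
noncomputable def clusterDegree (H : Finset (Finset V)) (ε d : ℝ) (Vs : Fin t → Finset V)
    (i : Fin t) : ℕ :=
  {p : Fin t × Fin t | p.1 < p.2 ∧ p.1 ≠ i ∧ p.2 ≠ i ∧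
    ClusterEdge H ε d (Vs i) (Vs p.1) (Vs p.2)}.ncard

lemma exists_injective_image_eq {α : Type*} [DecidableEq α] (s : Finset α) :
    ∃ (t : ℕ) (f : Fin t → α), f.Injective ∧ univ.image f = s := by
  refine ⟨#s, fun i ↦ s.equivFin.symm i, Subtype.val_injective.comp s.equivFin.symm.injective, ?_⟩
  ext a
  simp only [mem_image, mem_univ, true_and]
  exact ⟨fun ⟨i, hi⟩ ↦ hi ▸ (s.equivFin.symm i).2, fun ha ↦ ⟨s.equivFin ⟨a, ha⟩, by simp⟩⟩

lemma ncard_irregular_le_card_irregularTriples (H : Finset (Finset V)) (ε : ℝ)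
    (hVs : Vs.Injective) :
    {p : Fin t × Fin t × Fin t | p.1 < p.2.1 ∧ p.2.1 < p.2.2 ∧
      ¬ EpsRegTriple H ε (Vs p.1) (Vs p.2.1) (Vs p.2.2)}.ncard ≤
        #(irregularTriples H ε (univ.image Vs)) := by
  rw [← Set.ncard_coe_finset]
  refine Set.ncard_le_ncard_of_injOn (Prod.map Vs (Prod.map Vs Vs)) ?_
    (hVs.prodMap (hVs.prodMap hVs)).injOn (finite_toSet _)
  rintro ⟨i, j, k⟩ ⟨hij, hjk, hirr⟩
  have hmem (i) : Vs i ∈ univ.image Vs := mem_image_of_mem Vs (mem_univ i)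
  exact mem_irregularTriples.2 ⟨hmem i, hmem j, hmem k, hVs.ne hij.ne, hVs.ne (hij.trans hjk).ne,
    hVs.ne hjk.ne, hirr⟩

lemma card_clusterPairs_le_two_mul_clusterDegree (H : Finset (Finset V)) (ε d : ℝ)
    (Vs : Fin t → Finset V) (i : Fin t) :
    #(clusterPairs H ε d (univ.image Vs) (Vs i)) ≤ 2 * clusterDegree H ε d Vs i := by
  classical
  set S : Finset (Fin t × Fin t) := {p | p.1 < p.2 ∧ p.1 ≠ i ∧ p.2 ≠ i ∧
    ClusterEdge H ε d (Vs i) (Vs p.1) (Vs p.2)} with hS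
  have hcover : clusterPairs H ε d (univ.image Vs) (Vs i) ⊆
      S.image (Prod.map Vs Vs) ∪ S.image (Prod.map Vs Vs ∘ Prod.swap) := by
    rintro ⟨B, C⟩ hBC
    simp only [mem_clusterPairs, mem_offDiag, mem_erase, mem_image, mem_univ, true_and] at hBC
    obtain ⟨⟨⟨hB, j, rfl⟩, ⟨hC, k, rfl⟩, hne⟩, hedge⟩ := hBC
    obtain hjk | hkj := (ne_of_apply_ne Vs hne).lt_or_gt
    · exact mem_union_left _ <| mem_image.2 ⟨(j, k), mem_filter.2 ⟨mem_univ _, hjk,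
        ne_of_apply_ne Vs hB, ne_of_apply_ne Vs hC, hedge⟩, rfl⟩
    · exact mem_union_right _ <| mem_image.2 ⟨(k, j), mem_filter.2 ⟨mem_univ _, hkj,
        ne_of_apply_ne Vs hC, ne_of_apply_ne Vs hB, hedge.swap⟩, rfl⟩
  have hdeg : clusterDegree H ε d Vs i = #S := by
    rw [← Set.ncard_coe_finset, hS, coe_filter_univ, clusterDegree]
  rw [hdeg, two_mul]
  exact (card_le_card hcover).trans <| (card_union_le _ _).trans <|
    add_le_add card_image_le card_image_le

lemma IsLocallyRegularFamily.isRegularPartition [Fintype V]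
    (hQ : IsLocallyRegularFamily H β (univ.image Vs) m) (hVs : Vs.Injective) (hβ : 0 ≤ β)
    (hβε : 36 * β ≤ ε) (ht : 4 ≤ t) : IsRegularPartition H ε (leftover (univ.image Vs)) Vs := by
  have hmem (i) : Vs i ∈ univ.image Vs := mem_image_of_mem Vs (mem_univ i)
  have hcard : #(univ.image Vs) = t := by rw [card_image_of_injective _ hVs, card_fin]
  refine ⟨fun i ↦ ?_, fun i j hij ↦ hQ.disjoint (hmem i) (hmem j) (hVs.ne hij), ?_,
    fun i j ↦ (hQ.card_eq _ (hmem i)).trans (hQ.card_eq _ (hmem j)).symm, ?_, ?_⟩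
  · exact disjoint_compl_left.mono_right (subset_biUnion_of_mem id (hmem i))
  · rw [leftover, image_biUnion, union_comm]
    exact union_compl _
  · exact hQ.card_leftover_le.trans (by gcongr; linarith)
  · have htriples := hQ.card_irregularTriples_le (by linarith) hβε (hcard.symm ▸ ht)
    rw [hcard] at htriples
    exact (Nat.cast_le.2 (ncard_irregular_le_card_irregularTriples H ε hVs)).trans htriples

lemma IsLocallyRegularFamily.le_clusterDegree [Fintype V] (hH : ∀ e ∈ H, #e = 3)
    (hQ : IsLocallyRegularFamily H β (univ.image Vs) m) (hVs : Vs.Injective) (hβ : 0 ≤ β)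
    (hβ' : β ≤ 1 / 2) (hβε : 36 * β ≤ ε) (ht : 2 ≤ t) (hεt : 24 ≤ ε * t) (hd : 0 ≤ d)
    (hδ : ∀ v, δ * (Fintype.card V).choose 2 ≤ #{e ∈ H | v ∈ e}) (i : Fin t) :
    (δ - ε - d) * t.choose 2 ≤ clusterDegree H ε d Vs i := by
  have hcard : #(univ.image Vs) = t := by rw [card_image_of_injective _ hVs, card_fin]
  have hpairs := hQ.le_card_clusterPairs hH hβ hβ' hβε (hcard.symm ▸ ht) (by rwa [hcard]) hd hδ
    (mem_image_of_mem Vs (mem_univ i))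
  have htwo : (#(clusterPairs H ε d (univ.image Vs) (Vs i)) : ℝ) ≤ 2 * clusterDegree H ε d Vs i :=
    mod_cast card_clusterPairs_le_two_mul_clusterDegree H ε d Vs i
  rw [hcard] at hpairs
  rw [Nat.cast_choose_two]
  linarith

end Enumeration

theorem cluster_hypergraph_min_degree_general {ε : ℝ} (hε : 0 < ε) (t₀ : ℕ) :
    ∃ T₀ n₀ : ℕ, ∀ (V : Type) [Fintype V] [DecidableEq V] (H : Finset (Finset V)),
      n₀ < Fintype.card V → (∀ e ∈ H, #e = 3) →
      ∃ (t : ℕ) (V₀ : Finset V) (Vs : Fin t → Finset V), t₀ < t ∧ t < T₀ ∧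
        IsRegularPartition H ε V₀ Vs ∧
        ∀ d δ : ℝ, 0 ≤ d → (∀ v, δ * (Fintype.card V).choose 2 ≤ #{e ∈ H | v ∈ e}) →
          ∀ i, (δ - ε - d) * t.choose 2 ≤ clusterDegree H ε d Vs i := by
  obtain ⟨β, hβ, hβε, hβ'⟩ : ∃ β : ℝ, 0 < β ∧ β ≤ ε / 36 ∧ β ≤ 1 / 2 :=
    ⟨min (ε / 36) (1 / 2), by positivity, min_le_left _ _, min_le_right _ _⟩
  obtain ⟨s, hs⟩ := exists_nat_ge (24 / ε)
  rw [le_div_iff₀' (by norm_num)] at hβε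
  rw [div_le_iff₀' hε] at hs
  obtain ⟨T, hT⟩ := exists_isLocallyRegularFamily hβ (by linarith) (t₀ + s + 4)
  refine ⟨T + 1, T, fun V _ _ H hn hH ↦ ?_⟩
  obtain ⟨Q, m, hQ, hlower, hupper⟩ := hT V H hH hn.le
  obtain ⟨t, Vs, hVs, rfl⟩ := exists_injective_image_eq Q
  rw [card_image_of_injective _ hVs, card_fin] at hlower hupper
  have hst : (s : ℝ) ≤ t := by exact_mod_cast (by lia : s ≤ t)
  exact ⟨t, _, Vs, by lia, by lia, hQ.isRegularPartition hVs hβ.le hβε (by lia),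
    fun d δ hd hδ ↦ hQ.le_clusterDegree hH hVs hβ.le hβ' hβε (by lia)
      (hs.trans (by gcongr)) hd hδ⟩

theorem cluster_hypergraph_min_degree (γ d ε : ℝ) (hε : 0 < ε) (hεd : ε < d) (hdγ : d < γ)
    (t₀ : ℕ) :
    ∃ T₀ n₀ : ℕ, ∀ (V : Type) [Fintype V] [DecidableEq V], ∀ (H : Finset (Finset V)) (n : ℕ),
      Fintype.card V = n → n₀ < n →
      (∀ e ∈ H, e.card = 3) →
      (∀ v : V, (7 / 16 + γ) * (n.choose 2 : ℝ) ≤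
        ((H.filter (fun e => v ∈ e)).card : ℝ)) →
      ∃ (t : ℕ) (V0 : Finset V) (Vs : Fin t → Finset V),
        t₀ < t ∧ t < T₀ ∧
        (∀ i, Disjoint V0 (Vs i)) ∧
        (∀ i j, i ≠ j → Disjoint (Vs i) (Vs j)) ∧
        (V0 ∪ Finset.univ.biUnion Vs = Finset.univ) ∧
        (∀ i j, (Vs i).card = (Vs j).card) ∧
        ((V0.card : ℝ) ≤ ε * n) ∧
        ((({p : Fin t × Fin t × Fin t | p.1 < p.2.1 ∧ p.2.1 < p.2.2 ∧
            ¬ EpsRegTriple H ε (Vs p.1) (Vs p.2.1) (Vs p.2.2)}).ncard : ℝ)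
          ≤ ε * (t.choose 3 : ℝ)) ∧
        ∀ i : Fin t,
          (7 / 16 + γ - ε - d) * (t.choose 2 : ℝ) ≤
            (({p : Fin t × Fin t | p.1 < p.2 ∧ p.1 ≠ i ∧ p.2 ≠ i ∧
              ClusterEdge H ε d (Vs i) (Vs p.1) (Vs p.2)}).ncard : ℝ) := by
  obtain ⟨T₀, n₀, h⟩ := cluster_hypergraph_min_degree_general hε t₀
  refine ⟨T₀, n₀, ?_⟩
  rintro V _ _ H _ rfl hn hH hδ
  obtain ⟨t, V₀, Vs, hlower, hupper, hreg, hdeg⟩ := h V H hn hH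
  exact ⟨t, V₀, Vs, hlower, hupper, hreg.disjoint_exceptional, hreg.disjoint, hreg.union_eq_univ,
    hreg.card_eq, hreg.card_exceptional_le, hreg.ncard_irregular_le,
    hdeg d _ (hε.trans hεd).le hδ⟩
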